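/- (Rank-deficiency propagation.) Consider x(t+1) = A x(t) + B u(t) with (A,B) controllable, and fix L ≥ 1, t ≥ L. Suppose (x(t−L+1), u(t−L+1),...,u(t−1)) ∈ im [H₁(x_{[0,t−L]}); H_{L−1}(u_{[0,t−2]})] and that the left kernel of [H₁(x_{[0,t−L]}); H_L(u_{[0,t−1]})] equals (left kernel of [H₁(x_{[0,t−L]}); H_{L−1}(u_{[0,t−2]})]) × {0_m}. Then for every i = 1,...,L, the left kernel of [H₁(x_{[0,t−L]}); H_L(u_{[0,t−1]})] equals (left kernel of [H₁(x_{[0,t−L]}); H_{L−i}(u_{[0,t−i−1]})]) × {0_{im}} (where for i = L the latter is left kernel of H₁(x_{[0,t−L]}) × {0_{mL}}). -/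

import Mathlib

open Matrix

/-- Stacked Hankel matrix [H₁(x_{[a, a+c−1]}); H_d(u_{[a, a+c+d−2]})]. -/
noncomputable def stackedHankel {n m : ℕ} (x : ℕ → Fin n → ℝ) (u : ℕ → Fin m → ℝ)
    (a d c : ℕ) : Matrix (Fin n ⊕ (Fin d × Fin m)) (Fin c) ℝ :=
  Matrix.of fun i s =>
    match i with
    | Sum.inl i => x (a + (s : ℕ)) i
    | Sum.inr (r, j) => u (a + (s : ℕ) + (r : ℕ)) j

/-- A vector against a stacked column, written with an input weight indexed by naturals. -/
lemma aux_dot {n m d : ℕ} (x : ℕ → Fin n → ℝ) (u : ℕ → Fin m → ℝ) (s : ℕ)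
    (w f : Fin n ⊕ (Fin d × Fin m) → ℝ) (η : ℕ → Fin m → ℝ)
    (hw : ∀ (r : Fin d) (j : Fin m), w (Sum.inr (r, j)) = η r j)
    (hf : ∀ i, f (Sum.inl i) = x s i)
    (hf2 : ∀ (r : Fin d) (j : Fin m), f (Sum.inr (r, j)) = u (s + r) j) :
    w ⬝ᵥ f = (fun i => w (Sum.inl i)) ⬝ᵥ x s + ∑ r ∈ Finset.range d, η r ⬝ᵥ u (s + r) := by
  rw [Finset.sum_range]
  simp only [dotProduct, Fintype.sum_sum_type, Fintype.sum_prod_type, hw, hf, hf2]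

lemma aux_ker {n m d c : ℕ} (x : ℕ → Fin n → ℝ) (u : ℕ → Fin m → ℝ)
    (w : Fin n ⊕ (Fin d × Fin m) → ℝ) (η : ℕ → Fin m → ℝ)
    (hw : ∀ (r : Fin d) (j : Fin m), w (Sum.inr (r, j)) = η r j) :
    w ᵥ* stackedHankel x u 0 d c = 0 ↔
      ∀ s < c, (fun i => w (Sum.inl i)) ⬝ᵥ x s
        + ∑ r ∈ Finset.range d, η r ⬝ᵥ u (s + r) = 0 := by
  have key : ∀ s : Fin c, (w ᵥ* stackedHankel x u 0 d c) s =
      (fun i => w (Sum.inl i)) ⬝ᵥ x s + ∑ r ∈ Finset.range d, η r ⬝ᵥ u (s + r) := by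
    intro s
    refine aux_dot x u s w _ η hw ?_ ?_
    · intro i; simp [stackedHankel]
    · intro r j; simp [stackedHankel]
  constructor
  · intro h s hs
    rw [← key ⟨s, hs⟩, h]; rfl
  · intro h
    funext s
    rw [key s]; exact h s s.2

/-- Rank-deficiency propagation: if (x(t−L+1), u(t−L+1),…,u(t−1)) lies in the image of
[H₁(x_{[0,t−L]}); H_{L−1}(u_{[0,t−2]})] and the left kernel of [H₁(x_{[0,t−L]}); H_L(u_{[0,t−1]})]
equals (left kernel of [H₁(x_{[0,t−L]}); H_{L−1}(u_{[0,t−2]})]) × {0_m}, then for every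
i = 1,…,L the left kernel of [H₁(x_{[0,t−L]}); H_L(u_{[0,t−1]})] equals
(left kernel of [H₁(x_{[0,t−L]}); H_{L−i}(u_{[0,t−i−1]})]) × {0_{im}}. -/
theorem stmt10 {n m : ℕ} (A : Matrix (Fin n) (Fin n) ℝ) (B : Matrix (Fin n) (Fin m) ℝ)
    (hctrb : (⨆ i : Fin n, LinearMap.range ((A ^ (i : ℕ) * B).mulVecLin)) = ⊤)
    (L t : ℕ) (hL : 1 ≤ L) (hLt : L ≤ t)
    (x : ℕ → Fin n → ℝ) (u : ℕ → Fin m → ℝ)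
    (htraj : ∀ s, x (s + 1) = A.mulVec (x s) + B.mulVec (u s))
    (hmem : (fun i : Fin n ⊕ (Fin (L - 1) × Fin m) =>
        match i with
        | Sum.inl i => x (t - L + 1) i
        | Sum.inr (r, j) => u (t - L + 1 + (r : ℕ)) j) ∈
      LinearMap.range (stackedHankel x u 0 (L - 1) (t - L + 1)).mulVecLin)
    (hker1 : ∀ v : Fin n ⊕ (Fin L × Fin m) → ℝ,
      v ᵥ* stackedHankel x u 0 L (t - L + 1) = 0 ↔
      ((fun p : Fin n ⊕ (Fin (L - 1) × Fin m) =>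
          match p with
          | Sum.inl q => v (Sum.inl q)
          | Sum.inr (r, j) => v (Sum.inr (Fin.castLE (Nat.sub_le L 1) r, j))) ᵥ*
            stackedHankel x u 0 (L - 1) (t - L + 1) = 0 ∧
        ∀ r : Fin L, L - 1 ≤ (r : ℕ) → ∀ j, v (Sum.inr (r, j)) = 0)) :
    ∀ i, 1 ≤ i → i ≤ L → ∀ v : Fin n ⊕ (Fin L × Fin m) → ℝ,
      v ᵥ* stackedHankel x u 0 L (t - L + 1) = 0 ↔
      ((fun p : Fin n ⊕ (Fin (L - i) × Fin m) =>
          match p with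
          | Sum.inl q => v (Sum.inl q)
          | Sum.inr (r, j) => v (Sum.inr (Fin.castLE (Nat.sub_le L i) r, j))) ᵥ*
            stackedHankel x u 0 (L - i) (t - L + 1) = 0 ∧
        ∀ r : Fin L, L - i ≤ (r : ℕ) → ∀ j, v (Sum.inr (r, j)) = 0) := by 
  -- natural-indexed weights
  let ext : (Fin n ⊕ (Fin L × Fin m) → ℝ) → ℕ → Fin m → ℝ := fun v r j =>
    if h : r < L then v (Sum.inr (⟨r, h⟩, j)) else 0
  have hext : ∀ v (r : Fin L) j, v (Sum.inr (r, j)) = ext v r j := by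
    intro v r j; simp [ext]
  set c := t - L + 1 with hc
  -- annihilators of depth at most `L - 1` also annihilate the next column
  have hnext : ∀ (ξ : Fin n → ℝ) (η : ℕ → Fin m → ℝ) (M : ℕ), M ≤ L - 1 →
      (∀ s < c, ξ ⬝ᵥ x s + ∑ r ∈ Finset.range M, η r ⬝ᵥ u (s + r) = 0) →
      ξ ⬝ᵥ x c + ∑ r ∈ Finset.range M, η r ⬝ᵥ u (c + r) = 0 := by
    intro ξ η M hM h
    let η' : ℕ → Fin m → ℝ := fun r => if r < M then η r else 0
    have hsum : ∀ s, ∑ r ∈ Finset.range (L - 1), η' r ⬝ᵥ u (s + r)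
        = ∑ r ∈ Finset.range M, η r ⬝ᵥ u (s + r) := by
      intro s
      rw [← Finset.sum_subset (Finset.range_mono hM)]
      · refine Finset.sum_congr rfl fun r hr => ?_
        simp [η', Finset.mem_range.1 hr]
      · intro r _ hr
        have : ¬ r < M := by simpa using hr
        simp [η', this]
    let w : Fin n ⊕ (Fin (L - 1) × Fin m) → ℝ := Sum.elim ξ (fun p => η' p.1 p.2)
    have hw : w ᵥ* stackedHankel x u 0 (L - 1) c = 0 := by
      rw [aux_ker x u w η' (fun _ _ => rfl)]
      intro s hs
      rw [hsum]; exact h s hs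
    obtain ⟨g, hg⟩ := hmem
    have h1 := aux_dot x u c w _ η' (fun _ _ => rfl) (fun i => (congrFun hg (Sum.inl i)))
      (fun r j => congrFun hg (Sum.inr (r, j)))
    rw [hsum, mulVecLin_apply, dotProduct_mulVec, hw, zero_dotProduct] at h1
    exact h1.symm
  -- vanishing of trailing coordinates
  have hvan : ∀ i, 1 ≤ i → i ≤ L → ∀ v : Fin n ⊕ (Fin L × Fin m) → ℝ,
      v ᵥ* stackedHankel x u 0 L c = 0 → ∀ r : Fin L, L - i ≤ (r : ℕ) →
        ∀ j, v (Sum.inr (r, j)) = 0 := by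
    intro i hi
    induction i, hi using Nat.le_induction with
    | base => intro _ v hv; exact ((hker1 v).1 hv).2
    | succ i hi ih =>
      intro hiL v hv
      have ih := ih (by omega)
      have hz := ih v hv
      have hv2 := (aux_ker x u v (ext v) (hext v)).1 hv
      have hsum : ∀ s, ∑ r ∈ Finset.range L, ext v r ⬝ᵥ u (s + r)
          = ∑ r ∈ Finset.range (L - i), ext v r ⬝ᵥ u (s + r) := by
        intro s
        refine (Finset.sum_subset (Finset.range_mono (Nat.sub_le L i)) ?_).symm
        intro r hr hr'
        have hr1 : r < L := by simpa using hr
        have hr2 : L - i ≤ r := by simpa using hr'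
        have : ext v r = 0 := by
          funext j; rw [← hext v ⟨r, hr1⟩ j]; exact hz _ hr2 j
        simp [this]
      simp only [hsum] at hv2
      have hcn := hnext _ _ _ (by omega) hv2
      have hall : ∀ s < c, (fun i => v (Sum.inl i)) ⬝ᵥ x (s + 1)
          + ∑ r ∈ Finset.range (L - i), ext v r ⬝ᵥ u (s + 1 + r) = 0 := by
        intro s hs
        rcases Nat.lt_or_ge (s + 1) c with h | h
        · exact hv2 _ h
        · have : s + 1 = c := by omega
          rw [this]; exact hcn
      -- the shifted annihilator
      let ξ := fun i => v (Sum.inl i)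
      let η' : ℕ → Fin m → ℝ := fun r =>
        match r with
        | 0 => ξ ᵥ* B
        | r + 1 => if r < L - i then ext v r else 0
      let w : Fin n ⊕ (Fin L × Fin m) → ℝ := Sum.elim (ξ ᵥ* A) (fun p => η' p.1 p.2)
      have hw : w ᵥ* stackedHankel x u 0 L c = 0 := by
        rw [aux_ker x u w η' (fun _ _ => rfl)]
        intro s hs
        have h1 := hall s hs
        rw [htraj, dotProduct_add, dotProduct_mulVec, dotProduct_mulVec] at h1
        have h2 : ∑ r ∈ Finset.range L, η' r ⬝ᵥ u (s + r)
            = ∑ r ∈ Finset.range (L - i + 1), η' r ⬝ᵥ u (s + r) := by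
          refine (Finset.sum_subset (Finset.range_mono (by omega)) ?_).symm
          intro r hr hr'
          have hr2 : L - i + 1 ≤ r := by simpa using hr'
          obtain ⟨r, rfl⟩ : ∃ k, r = k + 1 := ⟨r - 1, by omega⟩
          have : ¬ r < L - i := by omega
          simp [η', this]
        rw [h2, Finset.sum_range_succ']
        have h3 : ∑ r ∈ Finset.range (L - i), η' (r + 1) ⬝ᵥ u (s + (r + 1))
            = ∑ r ∈ Finset.range (L - i), ext v r ⬝ᵥ u (s + 1 + r) := by
          refine Finset.sum_congr rfl fun r hr => ?_
          have : s + (r + 1) = s + 1 + r := by omega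
          rw [this]
          simp [η', Finset.mem_range.1 hr]
        rw [h3]
        change (ξ ᵥ* A) ⬝ᵥ x s + (_ + (ξ ᵥ* B) ⬝ᵥ u s) = 0
        linarith
      intro r hr j
      by_cases hr2 : L - i ≤ (r : ℕ)
      · exact hz r hr2 j
      · have h4 := ih w hw ⟨r + 1, by omega⟩ (by simp only; omega) j
        have h5 : (r : ℕ) < L - i := by omega
        have h6 : η' (r + 1) j = 0 := h4
        simp only [η', h5, if_true] at h6
        rw [hext v r j]; exact h6
  intro i hi hiL v
  have hiff : (∀ r : Fin L, L - i ≤ (r : ℕ) → ∀ j, v (Sum.inr (r, j)) = 0) →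
      (v ᵥ* stackedHankel x u 0 L c = 0 ↔
      ((fun p : Fin n ⊕ (Fin (L - i) × Fin m) =>
          match p with
          | Sum.inl q => v (Sum.inl q)
          | Sum.inr (r, j) => v (Sum.inr (Fin.castLE (Nat.sub_le L i) r, j))) ᵥ*
            stackedHankel x u 0 (L - i) c = 0)) := by
    intro hz
    rw [aux_ker x u v (ext v) (hext v),
      aux_ker x u _ (ext v) (fun r j => hext v (Fin.castLE (Nat.sub_le L i) r) j)]
    have hsum : ∀ s, ∑ r ∈ Finset.range L, ext v r ⬝ᵥ u (s + r)
        = ∑ r ∈ Finset.range (L - i), ext v r ⬝ᵥ u (s + r) := by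
      intro s
      refine (Finset.sum_subset (Finset.range_mono (Nat.sub_le L i)) ?_).symm
      intro r hr hr'
      have hr1 : r < L := by simpa using hr
      have hr2 : L - i ≤ r := by simpa using hr'
      have : ext v r = 0 := by
        funext j; rw [← hext v ⟨r, hr1⟩ j]; exact hz _ hr2 j
      simp [this]
    simp only [hsum]
  constructor
  · intro hv
    have hz := hvan i hi hiL v hv
    exact ⟨(hiff hz).1 hv, hz⟩
  · rintro ⟨h1, hz⟩
    exact (hiff hz).2 h1
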